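/- Let M ∈ ℚ_+^{n×m} be nonzero and column-stochastic, and let ℳ be the LMC constructed from M. Then for every d ∈ ℕ: rrk+(M) ≤ d if and only if there exists an LMC ℳ' with d+2 states over the same alphabet such that ℳ' covers ℳ and rk(ℳ') = rk(ℳ). -/

import Mathlib

open Matrix

/-- `μ` is (the transition function of) a labelled Markov chain: all entries lie in
`[0,1]` and `∑_{σ ∈ Σ} μ(σ)` is row-stochastic. -/
def IsLMC {A S : Type} [Fintype A] [Fintype S] (μ : A → Matrix S S ℝ) : Prop :=
  (∀ a i j, 0 ≤ μ a i j) ∧ (∀ a i j, μ a i j ≤ 1) ∧ (∀ i, ∑ a, ∑ j, μ a i j = 1)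

/-- Transition matrix of a labelled Markov chain extended to words:
`μ(σ₁…σ_k) = μ(σ₁) ⋯ μ(σ_k)`, with `μ(ε) = I`. -/
noncomputable def lmcWord {A S : Type} [Fintype S] [DecidableEq S]
    (μ : A → Matrix S S ℝ) (w : List A) : Matrix S S ℝ :=
  (w.map μ).prod

/-- Entry of the backward matrix: `(B_ℳ)_{i,w} = e_i^⊤ μ(w) 𝟙`. -/
noncomputable def lmcB {A S : Type} [Fintype S] [DecidableEq S]
    (μ : A → Matrix S S ℝ) (i : S) (w : List A) : ℝ :=
  ∑ j, lmcWord μ w i j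

/-- The rank of an LMC: the dimension of the span of the columns of its backward matrix. -/
noncomputable def lmcRank {A S : Type} [Fintype S] [DecidableEq S]
    (μ : A → Matrix S S ℝ) : ℕ :=
  Module.finrank ℝ
    (Submodule.span ℝ (Set.range fun w : List A => fun i : S => lmcB μ i w))

/-- `ℳ'` (with transitions `μ'`) covers `ℳ` (with transitions `μ`) iff there is a
row-stochastic matrix `C` with `C · B_{ℳ'} = B_ℳ`. -/
def lmcCovers {A S S' : Type} [Fintype S] [DecidableEq S] [Fintype S'] [DecidableEq S']
    (μ' : A → Matrix S' S' ℝ) (μ : A → Matrix S S ℝ) : Prop :=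
  ∃ C : S → S' → ℝ, (∀ i l, 0 ≤ C i l) ∧ (∀ i, ∑ l, C i l = 1) ∧
    ∀ i (w : List A), ∑ l, C i l * lmcB μ' l w = lmcB μ i w

/-- The LMC constructed from a column-stochastic matrix `M ∈ ℝ_+^{n×m}`:
`μ(a_i)_{0,i} = 1/m`, `μ(b_j)_{i,m+1} = M_{j,i}`, `μ(✓)_{m+1,m+1} = 1`, otherwise `0`. -/
noncomputable def lmcMu {n m : ℕ} (M : Matrix (Fin n) (Fin m) ℝ) :
    (Fin m ⊕ Fin n ⊕ Unit) →
      Matrix (Unit ⊕ Fin m ⊕ Unit) (Unit ⊕ Fin m ⊕ Unit) ℝ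
  | Sum.inl i => Matrix.of fun p q =>
      match p, q with
      | Sum.inl _, Sum.inr (Sum.inl i') => if i' = i then 1 / (m : ℝ) else 0
      | _, _ => 0
  | Sum.inr (Sum.inl j) => Matrix.of fun p q =>
      match p, q with
      | Sum.inr (Sum.inl i), Sum.inr (Sum.inr _) => M j i
      | _, _ => 0
  | Sum.inr (Sum.inr _) => Matrix.of fun p q =>
      match p, q with
      | Sum.inr (Sum.inr _), Sum.inr (Sum.inr _) => 1
      | _, _ => 0

/-- The restricted nonnegative rank: the smallest inner dimension of a nonnegative
factorization `M = W * H` with `rank W = rank M`. -/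
noncomputable def rrkPos {n m : ℕ} (M : Matrix (Fin n) (Fin m) ℝ) : ℕ :=
  sInf {d : ℕ | ∃ W : Matrix (Fin n) (Fin d) ℝ, ∃ H : Matrix (Fin d) (Fin m) ℝ,
    (∀ i k, 0 ≤ W i k) ∧ (∀ k j, 0 ≤ H k j) ∧ M = W * H ∧ W.rank = M.rank}

section helpers

theorem lmcB_nil {A S : Type} [Fintype S] [DecidableEq S]
    (μ : A → Matrix S S ℝ) (i : S) : lmcB μ i [] = 1 := by
  simp [lmcB, lmcWord, Matrix.one_apply]

theorem lmcB_cons {A S : Type} [Fintype S] [DecidableEq S]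
    (μ : A → Matrix S S ℝ) (i : S) (a : A) (w : List A) :
    lmcB μ i (a :: w) = ∑ t, μ a i t * lmcB μ t w := by
  simp only [lmcB, lmcWord, List.map_cons, List.prod_cons, Matrix.mul_apply, Finset.mul_sum]
  rw [Finset.sum_comm]

theorem lmcB_single {A S : Type} [Fintype S] [DecidableEq S]
    (μ : A → Matrix S S ℝ) (i : S) (a : A) :
    lmcB μ i [a] = ∑ t, μ a i t := by
  simp [lmcB_cons, lmcB_nil]

theorem lmcB_submatrix {A S S' : Type} [Fintype S] [DecidableEq S] [Fintype S'] [DecidableEq S']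
    (μ : A → Matrix S S ℝ) (e : S' ≃ S) (w : List A) :
    ∀ i, lmcB (fun a => (μ a).submatrix e e) i w = lmcB μ (e i) w := by
  induction w with
  | nil => intro i; simp [lmcB_nil]
  | cons a w ih =>
    intro i
    simp only [lmcB_cons, Matrix.submatrix_apply, ih]
    exact e.sum_comp (fun t => μ a (e i) t * lmcB μ t w)

/-- span of columns -/
noncomputable def colSp {A S : Type} [Fintype S] [DecidableEq S]
    (μ : A → Matrix S S ℝ) : Submodule ℝ (S → ℝ) :=
  Submodule.span ℝ (Set.range fun w : List A => fun i : S => lmcB μ i w)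

theorem colSp_map {A S S' : Type} [Fintype S] [DecidableEq S] [Fintype S'] [DecidableEq S']
    (μ' : A → Matrix S' S' ℝ) (μ : A → Matrix S S ℝ) (C : Matrix S S' ℝ)
    (h : ∀ i (w : List A), ∑ l, C i l * lmcB μ' l w = lmcB μ i w) :
    (colSp μ').map C.mulVecLin = colSp μ := by
  unfold colSp
  rw [Submodule.map_span, ← Set.range_comp]
  congr 2
  funext w i
  simp [Matrix.mulVec, dotProduct, h]

theorem rank_le_of {A S S' : Type} [Fintype S] [DecidableEq S] [Fintype S'] [DecidableEq S']
    (μ' : A → Matrix S' S' ℝ) (μ : A → Matrix S S ℝ) (C : Matrix S S' ℝ)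
    (h : ∀ i (w : List A), ∑ l, C i l * lmcB μ' l w = lmcB μ i w) :
    lmcRank μ ≤ lmcRank μ' := by
  change Module.finrank ℝ (colSp μ) ≤ Module.finrank ℝ (colSp μ')
  rw [← colSp_map μ' μ C h]
  exact Submodule.finrank_map_le _ _

theorem exists_back {A S S' : Type} [Fintype S] [DecidableEq S] [Fintype S'] [DecidableEq S']
    (μ' : A → Matrix S' S' ℝ) (μ : A → Matrix S S ℝ) (C : Matrix S S' ℝ)
    (h : ∀ i (w : List A), ∑ l, C i l * lmcB μ' l w = lmcB μ i w)
    (hr : lmcRank μ' = lmcRank μ) :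
    ∃ X : S' → S → ℝ, ∀ k w, lmcB μ' k w = ∑ s, X k s * lmcB μ s w := by
  have hmap := colSp_map μ' μ C h
  change Module.finrank ℝ (colSp μ') = Module.finrank ℝ (colSp μ) at hr
  let f : colSp μ' →ₗ[ℝ] (S → ℝ) := C.mulVecLin.comp (colSp μ').subtype
  have hrange : LinearMap.range f = colSp μ := by
    rw [LinearMap.range_comp, Submodule.range_subtype, hmap]
  have hker : LinearMap.ker f = ⊥ := by
    have := LinearMap.finrank_range_add_finrank_ker f
    rw [hrange] at this
    exact Submodule.finrank_eq_zero.mp (by omega)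
  obtain ⟨g, hg⟩ := LinearMap.exists_leftInverse_of_injective f hker
  refine ⟨fun k s => (g (Pi.single s 1) : S' → ℝ) k, fun k w => ?_⟩
  have hmem : (fun l => lmcB μ' l w) ∈ colSp μ' := Submodule.subset_span ⟨w, rfl⟩
  have h1 : g (f ⟨_, hmem⟩) = ⟨_, hmem⟩ := by
    have := LinearMap.congr_fun hg ⟨_, hmem⟩
    simpa using this
  have h2 : f ⟨_, hmem⟩ = fun s => lmcB μ s w := by
    funext s
    simp [f, Matrix.mulVec, dotProduct, h]
  rw [h2] at h1
  have h3 : (fun s => lmcB μ s w) = ∑ s, lmcB μ s w • (Pi.single s (1:ℝ) : S → ℝ) := by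
    funext t
    simp [Finset.sum_apply, Pi.single_apply]
  rw [h3, map_sum] at h1
  have h4 := congrArg (fun v : colSp μ' => (v : S' → ℝ) k) h1
  simp only [map_smul, Submodule.coe_sum, Finset.sum_apply, Submodule.coe_smul, Pi.smul_apply,
    smul_eq_mul] at h4
  rw [← h4]
  exact Finset.sum_congr rfl fun s _ => mul_comm _ _

theorem fwd_fact {n m : ℕ} (M : Matrix (Fin n) (Fin m) ℝ) (d : ℕ) (h : rrkPos M ≤ d)
    (hM : ∀ j i, 0 ≤ M j i) :
    ∃ W : Matrix (Fin n) (Fin d) ℝ, ∃ H : Matrix (Fin d) (Fin m) ℝ, ∃ Y : Matrix (Fin m) (Fin d) ℝ,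
      (∀ i k, 0 ≤ W i k) ∧ (∀ k j, 0 ≤ H k j) ∧ M = W * H ∧ W = M * Y := by
  have hne : {d : ℕ | ∃ W : Matrix (Fin n) (Fin d) ℝ, ∃ H : Matrix (Fin d) (Fin m) ℝ,
    (∀ i k, 0 ≤ W i k) ∧ (∀ k j, 0 ≤ H k j) ∧ M = W * H ∧ W.rank = M.rank}.Nonempty := by
    refine ⟨m, M, 1, hM, ?_, by simp, rfl⟩
    intro k j
    rw [Matrix.one_apply]; split_ifs <;> norm_num
  have hmem := Nat.sInf_mem hne
  obtain ⟨d0, h, W, H, hW, hH, hMe, hr⟩ : ∃ d0, d0 ≤ d ∧ ∃ W : Matrix (Fin n) (Fin d0) ℝ,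
      ∃ H : Matrix (Fin d0) (Fin m) ℝ,
      (∀ i k, 0 ≤ W i k) ∧ (∀ k j, 0 ≤ H k j) ∧ M = W * H ∧ W.rank = M.rank :=
    ⟨_, h, hmem⟩
  have hY : ∃ Y : Matrix (Fin m) (Fin d0) ℝ, W = M * Y := by
    have hle : LinearMap.range M.mulVecLin ≤ LinearMap.range W.mulVecLin := by
      rw [hMe, Matrix.mulVecLin_mul]
      exact LinearMap.range_comp_le_range _ _
    have heq := Submodule.eq_of_le_of_finrank_eq hle hr.symm
    have : ∀ k, ∃ y, M.mulVec y = W.col k := by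
      intro k
      have : W.mulVecLin (Pi.single k 1) ∈ LinearMap.range M.mulVecLin := by
        rw [heq]; exact ⟨_, rfl⟩
      obtain ⟨y, hy⟩ := this
      exact ⟨y, by simpa using hy⟩
    choose y hy using this
    refine ⟨Matrix.of fun i k => y k i, ?_⟩
    ext j k
    have := congrFun (hy k) j
    simp [Matrix.mulVec, dotProduct] at this
    simp [Matrix.mul_apply, this]
  obtain ⟨Y, hY⟩ := hY
  obtain ⟨t, rfl⟩ := Nat.exists_eq_add_of_le h
  refine ⟨Matrix.of fun j => Fin.append (W j) 0, Matrix.of fun k i => Fin.append (fun k => H k i) 0 k,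
    Matrix.of fun i => Fin.append (Y i) 0, ?_, ?_, ?_, ?_⟩
  · intro i k
    refine Fin.addCases (fun k => ?_) (fun k => ?_) k <;> simp [hW]
  · intro k j
    refine Fin.addCases (fun k => ?_) (fun k => ?_) k <;> simp [hH]
  · ext j i
    rw [hMe]
    simp [Matrix.mul_apply, Fin.sum_univ_add]
  · ext j k
    refine Fin.addCases (fun k => ?_) (fun k => ?_) k
    · simp [Matrix.mul_apply]
      rw [hY]; simp [Matrix.mul_apply]
    · simp [Matrix.mul_apply]

theorem fwd_norm {n m : ℕ} (M : Matrix (Fin n) (Fin m) ℝ) (d : ℕ) (h : rrkPos M ≤ d)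
    (hM : ∀ j i, 0 ≤ M j i) (hc : ∀ i, ∑ j, M j i = 1) (i0 : Fin m) :
    ∃ W : Matrix (Fin n) (Fin d) ℝ, ∃ H : Matrix (Fin d) (Fin m) ℝ, ∃ Y : Matrix (Fin m) (Fin d) ℝ,
      (∀ i k, 0 ≤ W i k) ∧ (∀ k j, 0 ≤ H k j) ∧ M = W * H ∧ W = M * Y ∧
      (∀ k, ∑ j, W j k = 1) ∧ (∀ i, ∑ k, H k i = 1) ∧ (∀ k, ∑ i, Y i k = 1) := by
  obtain ⟨W, H, Y, hW, hH, hMe, hY⟩ := fwd_fact M d h hM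
  let s : Fin d → ℝ := fun k => ∑ j, W j k
  have hs : ∀ k, 0 ≤ s k := fun k => Finset.sum_nonneg fun j _ => hW j k
  have hs0 : ∀ k, s k = 0 → ∀ j, W j k = 0 := by
    intro k hk j
    exact (Finset.sum_eq_zero_iff_of_nonneg (fun j _ => hW j k)).mp hk j (Finset.mem_univ _)
  let W' : Matrix (Fin n) (Fin d) ℝ := Matrix.of fun j k => if s k = 0 then M j i0 else (s k)⁻¹ * W j k
  let H' : Matrix (Fin d) (Fin m) ℝ := Matrix.of fun k i => s k * H k i
  let Y' : Matrix (Fin m) (Fin d) ℝ := Matrix.of fun i k =>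
    if s k = 0 then (if i = i0 then 1 else 0) else (s k)⁻¹ * Y i k
  have e1 : M = W' * H' := by
    ext j i
    rw [hMe, Matrix.mul_apply, Matrix.mul_apply]
    refine Finset.sum_congr rfl fun k _ => ?_
    by_cases hk : s k = 0
    · simp [W', H', hk, hs0 k hk j]
    · simp only [W', H', Matrix.of_apply, hk, if_false]; field_simp
  have e2 : W' = M * Y' := by
    ext j k
    rw [Matrix.mul_apply]
    by_cases hk : s k = 0
    · simp [W', Y', hk]
    · simp only [W', Y', Matrix.of_apply, hk, if_false]
      have : W j k = ∑ i, M j i * Y i k := by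
        conv_lhs => rw [hY]
        rw [Matrix.mul_apply]
      rw [this, Finset.mul_sum]
      exact Finset.sum_congr rfl fun i _ => by ring
  have c1 : ∀ k, ∑ j, W' j k = 1 := by
    intro k
    by_cases hk : s k = 0
    · simp [W', hk, hc]
    · simp only [W', Matrix.of_apply, hk, if_false, ← Finset.mul_sum]
      exact inv_mul_cancel₀ hk
  refine ⟨W', H', Y', ?_, ?_, e1, e2, c1, ?_, ?_⟩
  · intro j k
    simp only [W', Matrix.of_apply]
    split_ifs
    · exact hM _ _
    · exact mul_nonneg (inv_nonneg.mpr (hs k)) (hW _ _)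
  · intro k i
    exact mul_nonneg (hs k) (hH _ _)
  · intro i
    have := hc i
    rw [e1] at this
    simp only [Matrix.mul_apply] at this
    rw [Finset.sum_comm] at this
    simpa [← Finset.sum_mul, c1] using this
  · intro k
    have := c1 k
    rw [e2] at this
    simp only [Matrix.mul_apply] at this
    rw [Finset.sum_comm] at this
    simpa [← Finset.sum_mul, hc] using this

/-- generalized chain -/
noncomputable def genMu {n m d : ℕ} (W : Matrix (Fin n) (Fin d) ℝ) (H : Matrix (Fin d) (Fin m) ℝ) :
    (Fin m ⊕ Fin n ⊕ Unit) →
      Matrix (Unit ⊕ Fin d ⊕ Unit) (Unit ⊕ Fin d ⊕ Unit) ℝ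
  | Sum.inl i => Matrix.of fun p q =>
      match p, q with
      | Sum.inl _, Sum.inr (Sum.inl k) => H k i / (m : ℝ)
      | _, _ => 0
  | Sum.inr (Sum.inl j) => Matrix.of fun p q =>
      match p, q with
      | Sum.inr (Sum.inl k), Sum.inr (Sum.inr _) => W j k
      | _, _ => 0
  | Sum.inr (Sum.inr _) => Matrix.of fun p q =>
      match p, q with
      | Sum.inr (Sum.inr _), Sum.inr (Sum.inr _) => 1
      | _, _ => 0

theorem lmcMu_eq {n m : ℕ} (M : Matrix (Fin n) (Fin m) ℝ) : lmcMu M = genMu M 1 := by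
  funext a
  ext p q
  rcases a with i | j | _ <;> rcases p with _ | p | _ <;> rcases q with _ | q | _ <;>
    simp [lmcMu, genMu, Matrix.one_apply, ite_div]

theorem gen_isLMC {n m d : ℕ} (W : Matrix (Fin n) (Fin d) ℝ) (H : Matrix (Fin d) (Fin m) ℝ)
    (hm : 0 < m) (hW : ∀ j k, 0 ≤ W j k) (hH : ∀ k i, 0 ≤ H k i)
    (hWs : ∀ k, ∑ j, W j k = 1) (hHs : ∀ i, ∑ k, H k i = 1) : IsLMC (genMu W H) := by
  have h0 : ∀ a i j, 0 ≤ genMu W H a i j := by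
    intro a p q
    rcases a with i | j | _ <;> rcases p with _ | p | _ <;> rcases q with _ | q | _ <;>
      simp [genMu, hW]
    exact div_nonneg (hH _ _) (by positivity)
  have h1 : ∀ i, ∑ a, ∑ j, genMu W H a i j = 1 := by
    intro p
    rcases p with _ | p | _ <;> simp [genMu, hWs]
    simp [← Finset.sum_div, hHs]
    field_simp
  refine ⟨h0, ?_, h1⟩
  intro a i j
  rw [← h1 i]
  calc _ ≤ ∑ j, genMu W H a i j :=
        Finset.single_le_sum (f := fun j => genMu W H a i j) (fun j _ => h0 a i j) (Finset.mem_univ j)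
    _ ≤ _ := Finset.single_le_sum (f := fun a => ∑ j, genMu W H a i j)
        (fun a _ => Finset.sum_nonneg fun j _ => h0 a i j) (Finset.mem_univ a)

/-- block diagonal -/
noncomputable def blk {m d : ℕ} (H : Matrix (Fin d) (Fin m) ℝ) :
    Matrix (Unit ⊕ Fin m ⊕ Unit) (Unit ⊕ Fin d ⊕ Unit) ℝ
  | Sum.inl _, Sum.inl _ => 1
  | Sum.inr (Sum.inl i), Sum.inr (Sum.inl k) => H k i
  | Sum.inr (Sum.inr _), Sum.inr (Sum.inr _) => 1
  | _, _ => 0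

theorem gen_end {n m d e : ℕ} (W : Matrix (Fin n) (Fin d) ℝ) (H : Matrix (Fin d) (Fin m) ℝ)
    (W' : Matrix (Fin n) (Fin e) ℝ) (H' : Matrix (Fin e) (Fin m) ℝ) (w) :
    lmcB (genMu W H) (Sum.inr (Sum.inr ())) w = lmcB (genMu W' H') (Sum.inr (Sum.inr ())) w := by
  induction w with
  | nil => simp [lmcB_nil]
  | cons a w ih => rcases a with i | j | _ <;> simp [lmcB_cons, genMu, ih]

theorem gen_mid {n m d e : ℕ} (W : Matrix (Fin n) (Fin d) ℝ) (H : Matrix (Fin d) (Fin m) ℝ)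
    (W' : Matrix (Fin n) (Fin e) ℝ) (H' : Matrix (Fin e) (Fin m) ℝ)
    (Y : Matrix (Fin e) (Fin d) ℝ) (h : W = W' * Y) (hY : ∀ k, ∑ i, Y i k = 1) (k) (w) :
    ∑ i, Y i k * lmcB (genMu W' H') (Sum.inr (Sum.inl i)) w
      = lmcB (genMu W H) (Sum.inr (Sum.inl k)) w := by
  cases w with
  | nil => simp [lmcB_nil, hY]
  | cons a w =>
    rcases a with i | j | _ <;> simp [lmcB_cons, genMu]
    rw [gen_end W H W' H', h, Matrix.mul_apply, Finset.sum_mul]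
    exact Finset.sum_congr rfl fun i _ => by ring

theorem gen_start {n m d : ℕ} (M : Matrix (Fin n) (Fin m) ℝ) (W : Matrix (Fin n) (Fin d) ℝ)
    (H : Matrix (Fin d) (Fin m) ℝ)
    (h : M = W * H) (hH : ∀ i, ∑ k, H k i = 1) (w) :
    lmcB (genMu W H) (Sum.inl ()) w = lmcB (genMu M 1) (Sum.inl ()) w := by
  cases w with
  | nil => simp [lmcB_nil]
  | cons a w =>
    rcases a with i | j | _ <;> simp [lmcB_cons, genMu]
    have := gen_mid M 1 W H H h hH i w
    simp only [div_mul_eq_mul_div, ← Finset.sum_div, this, Matrix.one_apply]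
    simp

theorem blk_sum {n m d e : ℕ} (W : Matrix (Fin n) (Fin d) ℝ) (H : Matrix (Fin d) (Fin m) ℝ)
    (W' : Matrix (Fin n) (Fin e) ℝ) (H' : Matrix (Fin e) (Fin m) ℝ)
    (Y : Matrix (Fin e) (Fin d) ℝ) (h : W = W' * Y) (hY : ∀ k, ∑ i, Y i k = 1) (w)
    (hs : lmcB (genMu W' H') (Sum.inl ()) w = lmcB (genMu W H) (Sum.inl ()) w) (i) :
    ∑ l, blk Y i l * lmcB (genMu W' H') l w = lmcB (genMu W H) i w := by
  rcases i with _ | k | _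
  · simp [blk, hs]
  · simp [blk, gen_mid W H W' H' Y h hY]
  · simp [blk, gen_end W H W' H']

theorem blk_nonneg {m d : ℕ} (H : Matrix (Fin d) (Fin m) ℝ) (hH : ∀ k i, 0 ≤ H k i) (p q) :
    0 ≤ blk H p q := by
  rcases p with _ | p | _ <;> rcases q with _ | q | _ <;> simp [blk, hH]

theorem blk_row {m d : ℕ} (H : Matrix (Fin d) (Fin m) ℝ) (hH : ∀ i, ∑ k, H k i = 1) (p) :
    ∑ q, blk H p q = 1 := by
  rcases p with _ | p | _ <;> simp [blk, hH]

theorem fwd {n m : ℕ} (M : Matrix (Fin n) (Fin m) ℝ) (d : ℕ) (h : rrkPos M ≤ d)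
    (hM : ∀ j i, 0 ≤ M j i) (hc : ∀ i, ∑ j, M j i = 1) (i0 : Fin m) :
    ∃ μ' : (Fin m ⊕ Fin n ⊕ Unit) → Matrix (Fin (d + 2)) (Fin (d + 2)) ℝ,
        IsLMC μ' ∧ lmcCovers μ' (lmcMu M) ∧ lmcRank μ' = lmcRank (lmcMu M) := by
  obtain ⟨W, H, Y, hW, hH, hMe, hY, hWs, hHs, hYs⟩ := fwd_norm M d h hM hc i0
  have hm : 0 < m := i0.pos
  have hL := gen_isLMC W H hm hW hH hWs hHs
  let e : Fin (d + 2) ≃ Unit ⊕ Fin d ⊕ Unit :=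
    Fintype.equivOfCardEq (by simp; omega)
  rw [lmcMu_eq]
  have hB := lmcB_submatrix (genMu W H) e
  have hcov : ∀ i w, ∑ l, blk H i (e l) * lmcB (fun a => (genMu W H a).submatrix e e) l w
      = lmcB (genMu M 1) i w := by
    intro i w
    simp only [hB]
    rw [e.sum_comp (fun l => blk H i l * lmcB (genMu W H) l w)]
    exact blk_sum M 1 W H H hMe hHs w (gen_start M W H hMe hHs w) i
  refine ⟨fun a => (genMu W H a).submatrix e e, ⟨?_, ?_, ?_⟩,
    ⟨fun i l => blk H i (e l), ?_, ?_, hcov⟩, le_antisymm ?_ ?_⟩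
  · intro a i j; exact hL.1 _ _ _
  · intro a i j; exact hL.2.1 _ _ _
  · intro i
    rw [← hL.2.2 (e i)]
    exact Finset.sum_congr rfl fun a _ => e.sum_comp (fun j => genMu W H a (e i) j)
  · intro i l; exact blk_nonneg H hH _ _
  · intro i
    rw [← blk_row H hHs i]
    exact e.sum_comp (fun l => blk H i l)
  · apply rank_le_of _ _ (Matrix.of fun l i => blk Y (e l) i)
    intro l w
    rw [hB]
    exact blk_sum W H M 1 Y hY hYs w (gen_start M W H hMe hHs w).symm (e l)
  · exact rank_le_of _ _ (Matrix.of fun i l => blk H i (e l)) hcov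

theorem rrk_le {n m : ℕ} (M : Matrix (Fin n) (Fin m) ℝ) (d : ℕ)
    (W : Matrix (Fin n) (Fin d) ℝ) (H : Matrix (Fin d) (Fin m) ℝ) (Y : Matrix (Fin m) (Fin d) ℝ)
    (hW : ∀ i k, 0 ≤ W i k) (hH : ∀ k j, 0 ≤ H k j) (h : M = W * H) (hY : W = M * Y) :
    rrkPos M ≤ d := by
  apply Nat.sInf_le
  refine ⟨W, H, hW, hH, h, le_antisymm ?_ ?_⟩
  · rw [hY]; exact Matrix.rank_mul_le_left _ _
  · rw [h]; exact Matrix.rank_mul_le_left _ _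

theorem bwd {n m : ℕ} (M : Matrix (Fin n) (Fin m) ℝ) (d : ℕ)
    (μ' : (Fin m ⊕ Fin n ⊕ Unit) → Matrix (Fin (d + 2)) (Fin (d + 2)) ℝ)
    (hL : IsLMC μ') (hC : lmcCovers μ' (lmcMu M)) (hr : lmcRank μ' = lmcRank (lmcMu M)) :
    rrkPos M ≤ d := by
  obtain ⟨C, hC0, hC1, hC⟩ := hC
  obtain ⟨X, hX⟩ := exists_back μ' (lmcMu M) C hC hr
  rw [lmcMu_eq] at hC hX
  have hBnn : ∀ l a, 0 ≤ lmcB μ' l [a] := by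
    intro l a
    rw [lmcB_single]; exact Finset.sum_nonneg fun j _ => hL.1 _ _ _
  have hBs : ∀ l, ∑ a, lmcB μ' l [a] = 1 := by
    intro l
    simp only [lmcB_single]; exact hL.2.2 l
  have hz : ∀ (s : Unit ⊕ Fin m ⊕ Unit) a l, lmcB (genMu M 1) s [a] = 0 → C s l ≠ 0 → lmcB μ' l [a] = 0 := by
    intro s a l h0 hne
    have := hC s [a]
    rw [h0, Finset.sum_eq_zero_iff_of_nonneg
      (fun l _ => mul_nonneg (hC0 s l) (hBnn l a))] at this
    exact (mul_eq_zero.mp (this l (Finset.mem_univ _))).resolve_left hne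
  have hex : ∀ s, ∃ l, C s l ≠ 0 := by
    intro s
    by_contra hcon
    push Not at hcon
    have := hC1 s
    simp [hcon] at this
  obtain ⟨l0, hl0⟩ := hex (Sum.inl ())
  obtain ⟨l1, hl1⟩ := hex (Sum.inr (Sum.inr ()))
  -- two different kinds of states have disjoint supports
  have hdis : ∀ (s s' : Unit ⊕ Fin m ⊕ Unit) l, C s l ≠ 0 → C s' l ≠ 0 →
      (∀ a : Fin m ⊕ Fin n ⊕ Unit, lmcB (genMu M 1) s [a] = 0 ∨ lmcB (genMu M 1) s' [a] = 0) → False := by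
    intro s s' l h h' hall
    have := hBs l
    rw [Finset.sum_eq_zero] at this
    · norm_num at this
    · intro a _
      rcases hall a with h1 | h1
      · exact hz s a l h1 h
      · exact hz s' a l h1 h'
  have hne : l0 ≠ l1 := by
    rintro rfl
    refine hdis _ _ _ hl0 hl1 ?_
    rintro (i | j | _) <;> simp [lmcB_single, genMu]
  have hCl0 : ∀ i, C (Sum.inr (Sum.inl i)) l0 = 0 := by
    intro i
    by_contra hcon
    refine hdis _ _ _ hl0 hcon ?_
    rintro (i | j | _) <;> simp [lmcB_single, genMu]
  have hCl1 : ∀ i, C (Sum.inr (Sum.inl i)) l1 = 0 := by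
    intro i
    by_contra hcon
    refine hdis _ _ _ hl1 hcon ?_
    rintro (i | j | _) <;> simp [lmcB_single, genMu]
  let K : Finset (Fin (d + 2)) := {l0, l1}ᶜ
  have hK : K.card = d := by
    rw [Finset.card_compl, Finset.card_pair hne]; simp
  let e : Fin d ≃ K := (K.equivFinOfCardEq hK).symm
  refine rrk_le M d (Matrix.of fun j k => lmcB μ' (e k) [Sum.inr (Sum.inl j)])
    (Matrix.of fun k i => C (Sum.inr (Sum.inl i)) (e k))
    (Matrix.of fun i k => X (e k) (Sum.inr (Sum.inl i))) ?_ ?_ ?_ ?_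
  · intro j k; exact hBnn _ _
  · intro k i; exact hC0 _ _
  · ext j i
    have h1 := hC (Sum.inr (Sum.inl i)) [Sum.inr (Sum.inl j)]
    have h2 : lmcB (genMu M (1 : Matrix (Fin m) (Fin m) ℝ)) (Sum.inr (Sum.inl i)) [Sum.inr (Sum.inl j)] = M j i := by
      simp [lmcB_single, genMu]
    rw [h2] at h1
    rw [← h1, Matrix.mul_apply]
    simp only [Matrix.of_apply]
    rw [e.sum_comp (fun k : K => lmcB μ' k [Sum.inr (Sum.inl j)] * C (Sum.inr (Sum.inl i)) k),
      Finset.sum_coe_sort K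
        (fun k => lmcB μ' k [Sum.inr (Sum.inl j)] * C (Sum.inr (Sum.inl i)) k)]
    symm
    rw [Finset.sum_congr rfl fun k _ => mul_comm _ _]
    apply Finset.sum_subset (Finset.subset_univ K)
    intro k _ hk
    have : k = l0 ∨ k = l1 := by
      by_contra hcon
      exact hk (by simpa [K] using hcon)
    rcases this with rfl | rfl
    · rw [hCl0, zero_mul]
    · rw [hCl1, zero_mul]
  · ext j k
    simp only [Matrix.of_apply, Matrix.mul_apply]
    rw [hX]
    simp [lmcB_single, genMu]
    exact Finset.sum_congr rfl fun i _ => mul_comm _ _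

end helpers

/-- Let `M ∈ ℚ_+^{n×m}` be nonzero and column-stochastic and `ℳ` the LMC constructed
from it. For every positive `d`: `rrk+(M) ≤ d` iff there is an LMC `ℳ'` with `d+2`
states over the same alphabet that covers `ℳ` and satisfies `rk(ℳ') = rk(ℳ)`. -/
theorem stmt8 {n m : ℕ}
    (M : Matrix (Fin n) (Fin m) ℚ)
    (hMnn : ∀ j i, 0 ≤ M j i) (hMne : M ≠ 0) (hMcs : ∀ i : Fin m, ∑ j, M j i = 1)
    (d : ℕ) (hd : 0 < d) :
    rrkPos (M.map ((↑) : ℚ → ℝ)) ≤ d ↔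
      ∃ μ' : (Fin m ⊕ Fin n ⊕ Unit) → Matrix (Fin (d + 2)) (Fin (d + 2)) ℝ,
        IsLMC μ' ∧ lmcCovers μ' (lmcMu (M.map ((↑) : ℚ → ℝ))) ∧
        lmcRank μ' = lmcRank (lmcMu (M.map ((↑) : ℚ → ℝ))) := by
  have hM : ∀ j i, 0 ≤ M.map ((↑) : ℚ → ℝ) j i := by
    intro j i
    simpa using hMnn j i
  have hc : ∀ i, ∑ j, M.map ((↑) : ℚ → ℝ) j i = 1 := by
    intro i
    simp only [Matrix.map_apply]
    exact_mod_cast hMcs i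
  have hi : Nonempty (Fin m) := by
    by_contra hcon
    rw [not_nonempty_iff] at hcon
    exact hMne (by ext j i; exact hcon.elim i)
  obtain ⟨i0⟩ := hi
  constructor
  · intro h
    exact fwd _ d h hM hc i0
  · rintro ⟨μ', hL, hC, hr⟩
    exact bwd _ d μ' hL hC hr
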